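/- Let X = ∏_{i≥1} ℤ^i with the ∞-metric d(x,y) = Σ_{i=1}^∞ d_i(x_i, y_i), where d_i is the sup-metric on ℤ^i. Then the large scale structure on X induced by d does not have bounded scale measure at any scale: for every n ∈ ℕ there is no k ∈ ℕ such that every ball of radius n+1 is covered by k balls of radius n. -/

import Mathlib

open Set ENNReal

/-- The `∞`-metric `d(x,y) = Σᵢ maxₖ |xᵢₖ − yᵢₖ|` on `X = ∏_{i ≥ 1} ℤⁱ`. -/
noncomputable def dProd (x y : ∀ i : ℕ, Fin (i + 1) → ℤ) : ℝ≥0∞ :=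
  ∑' i : ℕ, ⨆ k : Fin (i + 1), ((x i k - y i k).natAbs : ℝ≥0∞)

/-- The ball of radius `r` about `x` for the above `∞`-metric. -/
def ballProd (x : ∀ i : ℕ, Fin (i + 1) → ℤ) (r : ℝ≥0∞) :
    Set (∀ i : ℕ, Fin (i + 1) → ℤ) :=
  {y | dProd x y ≤ r}

/-!
Moving a point `x` by `r` in a single factor, a different one each time, gives infinitely many
points at distance `r` from `x`. Since the metric is a sum over the factors, two such points are
`2 r` apart, so a ball of radius `s < r` contains at most one of them. Hence finitely many balls of
radius `s` never cover the ball of radius `r` about `x`.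
-/

section SumEdist

variable {ι : Type*} {E : ι → Type*} [∀ i, PseudoEMetricSpace (E i)]

/-- The `ℓ¹` extended distance on a product of arbitrarily many extended pseudometric spaces, of
which `dProd` is a special case. It is a plain function rather than an `EDist` instance, since
finite products already carry the sup distance. -/
noncomputable def sumEdist (x y : ∀ i, E i) : ℝ≥0∞ :=
  ∑' i, edist (x i) (y i)

lemma sumEdist_triangle_left (x y z : ∀ i, E i) :
    sumEdist x y ≤ sumEdist z x + sumEdist z y :=
  calc
    sumEdist x y ≤ ∑' i, (edist (z i) (x i) + edist (z i) (y i)) :=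
      ENNReal.tsum_le_tsum fun _ => edist_triangle_left _ _ _
    _ = sumEdist z x + sumEdist z y := ENNReal.tsum_add

lemma edist_add_edist_le_sumEdist (x y : ∀ i, E i) {i j : ι} (hij : i ≠ j) :
    edist (x i) (y i) + edist (x j) (y j) ≤ sumEdist x y := by
  classical
  rw [← Finset.sum_pair (f := fun l => edist (x l) (y l)) hij]
  exact ENNReal.sum_le_tsum {i, j}

lemma sumEdist_update_right [DecidableEq ι] (x : ∀ i, E i) (i : ι) (b : E i) :
    sumEdist x (Function.update x i b) = edist (x i) b := by
  rw [sumEdist, tsum_eq_single i, Function.update_self]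
  intro j hj
  rw [Function.update_of_ne hj, edist_self]

lemma edist_add_edist_le_sumEdist_update [DecidableEq ι] (x : ∀ i, E i) {i j : ι} (hij : i ≠ j)
    (a : E i) (b : E j) :
    edist (x i) a + edist (x j) b ≤
      sumEdist (Function.update x i a) (Function.update x j b) := by
  simpa [hij, hij.symm, edist_comm a] using
    edist_add_edist_le_sumEdist (Function.update x i a) (Function.update x j b) hij

theorem not_sumEdist_ball_subset_biUnion_of_finite [Infinite ι] {x y : ∀ i, E i} {r s : ℝ≥0∞}
    (hxy : ∀ i, edist (x i) (y i) = r) (hsr : s < r) {F : Set (∀ i, E i)} (hF : F.Finite) :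
    ¬ {z | sumEdist x z ≤ r} ⊆ ⋃ c ∈ F, {z | sumEdist c z ≤ s} := by
  classical
  intro hcover
  let p : ι → ∀ i, E i := fun i => Function.update x i (y i)
  have p_mem_ball (i : ι) : sumEdist x (p i) ≤ r := by
    rw [sumEdist_update_right, hxy]
  have exists_center (i : ι) : ∃ c : F, sumEdist c (p i) ≤ s := by
    simpa using hcover (p_mem_ball i)
  choose c hc using exists_center
  have : Finite F := hF
  obtain ⟨i, j, hij, hcij⟩ := Finite.exists_ne_map_eq_of_infinite c
  have : r + r ≤ s + s :=
    calc
      r + r = edist (x i) (y i) + edist (x j) (y j) := by rw [hxy, hxy]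
      _ ≤ sumEdist (p i) (p j) := edist_add_edist_le_sumEdist_update x hij _ _
      _ ≤ sumEdist (c i) (p i) + sumEdist (c i) (p j) := sumEdist_triangle_left _ _ _
      _ ≤ s + s := add_le_add (hc i) (hcij ▸ hc j)
  exact this.not_gt (ENNReal.add_lt_add hsr hsr)

end SumEdist

lemma edist_int_eq_natAbs_sub (a b : ℤ) : edist a b = (a - b).natAbs := by
  rw [edist_dist, Int.dist_eq, ← Int.cast_sub, ← Int.cast_abs, ← Nat.cast_natAbs,
    ENNReal.ofReal_natCast]

lemma dProd_eq_sumEdist (x y : ∀ i : ℕ, Fin (i + 1) → ℤ) : dProd x y = sumEdist x y := by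
  simp only [dProd, sumEdist, edist_pi_def, Finset.sup_univ_eq_iSup, edist_int_eq_natAbs_sub]

lemma edist_pi_int_add_natCast_right {κ : Type*} [Fintype κ] [Nonempty κ] (v : κ → ℤ) (m : ℕ) :
    edist v (v + m) = m := by
  simp [edist_pi_def, edist_int_eq_natAbs_sub, Finset.sup_const]

theorem prod_int_no_bsm_general {m : ℕ} {s : ℝ≥0∞} (hs : s < m) (x : ∀ i : ℕ, Fin (i + 1) → ℤ)
    {F : Set (∀ i : ℕ, Fin (i + 1) → ℤ)} (hF : F.Finite) :
    ¬ ballProd x m ⊆ ⋃ c ∈ F, ballProd c s := by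
  simp only [ballProd, dProd_eq_sumEdist]
  exact not_sumEdist_ball_subset_biUnion_of_finite (y := fun i => x i + m)
    (fun i => edist_pi_int_add_natCast_right (x i) m) hs hF

/-- The space `∏_{i ≥ 1} ℤⁱ` with the `∞`-metric above fails bounded scale measure
at every scale: for every `n` there is no `k` such that every ball of radius `n+1`
is covered by `k` balls of radius `n`. -/
theorem prod_int_no_bsm :
    ∀ n : ℕ, ¬ ∃ k : ℕ, ∀ x : ∀ i : ℕ, Fin (i + 1) → ℤ,
      ∃ F : Finset (∀ i : ℕ, Fin (i + 1) → ℤ),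
        F.card ≤ k ∧ ballProd x (n + 1) ⊆ ⋃ c ∈ F, ballProd c n := by
  rintro n ⟨k, hk⟩
  obtain ⟨F, -, hcover⟩ := hk 0
  exact prod_int_no_bsm_general (m := n + 1) (s := n) (by exact_mod_cast n.lt_succ_self) 0
    F.finite_toSet (by simpa using hcover)
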